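/- arXiv:2602.14325 — 4 statements merged into one kernel-verified Lean document; each statement's English description precedes it below -/
import Mathlib

section
/- (Nim-periodicity) For every Lengyel transfer game L(b;x₁,y₁;x₂,y₂) and every position (x,y) ∈ ℕ×ℕ, one has SG(x, y+b) = SG(x,y) ⊕ 1. -/
/-- The minimum excludant of a set of naturals: the least natural number not in the set. -/
noncomputable def mex (S : Set ℕ) : ℕ := sInf {n : ℕ | n ∉ S}

/-- `SG` is the Sprague–Grundy function of the Lengyel transfer game `L(b; x₁,y₁; x₂,y₂)`:
from `(x,y)` one may move to `(x, y−b)` (when `y ≥ b`), to `(x−x₁, y+y₁)` (when `x ≥ x₁`),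
or to `(x−x₂, y+y₂)` (when `x ≥ x₂`), and `SG` satisfies the mex recurrence. -/
def IsLengyelSG (b x1 y1 x2 y2 : ℕ) (SG : ℕ → ℕ → ℕ) : Prop :=
  ∀ x y : ℕ, SG x y = mex
    ((if b ≤ y then ({SG x (y - b)} : Set ℕ) else ∅) ∪
     (if x1 ≤ x then ({SG (x - x1) (y + y1)} : Set ℕ) else ∅) ∪
     (if x2 ≤ x then ({SG (x - x2) (y + y2)} : Set ℕ) else ∅))

/-!
Nim-adding `1` swaps the two members of each pair `{2k, 2k + 1}` and keeps distinct pairs in order.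
Hence it commutes with `mex` on every set `S ≠ ℕ` which contains the partner `mex S ⊕ 1` of its mex.

By induction on `x`, passing from `(x, y)` to `(x, y + b)` nim-adds `1` to the values of all options
reached by a transfer. Let `S` consist of these values at `(x, y)` together with `SG(x, y) ⊕ 1`.
Then `mex S = SG(x, y)`: by induction on `y`, the value `SG(x, y) ⊕ 1` is that of the option
`(x, y - b)` if `b ≤ y`; otherwise adjoining it leaves the mex unchanged, since it differs from the
mex. The values of the options of `(x, y + b)` are exactly the elements of `S` nim-added to `1`, so
their mex is `SG(x, y) ⊕ 1`.
-/

theorem xor_one_lt_of_lt_xor_one {m n : ℕ} (h : m < n ^^^ 1) (hne : m ≠ n) : m ^^^ 1 < n := by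
  have div_two (k : ℕ) : (k ^^^ 1) / 2 = k / 2 := by simp [Nat.xor_div_two]
  have mod_two (k : ℕ) : (k ^^^ 1) % 2 = (k + 1) % 2 := Nat.xor_mod_two_eq
  grind [div_two m, div_two n, mod_two m, mod_two n]

section Mex

variable {S : Set ℕ} {m n : ℕ}

theorem mex_notMem (hS : Sᶜ.Nonempty) : mex S ∉ S :=
  Nat.sInf_mem hS

theorem mem_of_lt_mex (h : n < mex S) : n ∈ S :=
  not_not.mp (Nat.notMem_of_lt_sInf h)

theorem mex_eq_of_notMem_of_forall_lt (hm : m ∉ S) (hlt : ∀ n < m, n ∈ S) : mex S = m :=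
  IsLeast.csInf_eq ⟨hm, fun n hn => not_lt.mp fun h => hn (hlt n h)⟩

theorem mex_insert_of_ne (h : n ≠ mex S) : mex (insert n S) = mex S := by
  rcases Sᶜ.eq_empty_or_nonempty with hS | hS
  · rw [Set.insert_eq_of_mem (Set.compl_empty_iff.mp hS ▸ Set.mem_univ n)]
  · refine mex_eq_of_notMem_of_forall_lt ?_ fun k hk => Set.mem_insert_of_mem n (mem_of_lt_mex hk)
    rintro (heq | hmem)
    · exact h heq.symm
    · exact mex_notMem hS hmem

theorem mex_image_xor_one (hS : Sᶜ.Nonempty) (h : mex S ^^^ 1 ∈ S) :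
    mex ((· ^^^ 1) '' S) = mex S ^^^ 1 := by
  apply mex_eq_of_notMem_of_forall_lt
  · rintro ⟨k, hk, heq⟩
    exact mex_notMem hS (Nat.xor_left_injective heq ▸ hk)
  · intro k hk
    refine ⟨k ^^^ 1, ?_, Nat.xor_xor_cancel_right k 1⟩
    rcases eq_or_ne k (mex S) with rfl | hne
    · exact h
    · exact mem_of_lt_mex (xor_one_lt_of_lt_xor_one hk hne)

end Mex

theorem add_eq_xor_one_of_mex_recurrence {b : ℕ} (hb : 0 < b) {f : ℕ → ℕ} {A : ℕ → Set ℕ}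
    (hfin : ∀ y, (A y).Finite) (hA : ∀ y, A (y + b) = (· ^^^ 1) '' A y)
    (hlt : ∀ y < b, f y = mex (A y)) (hadd : ∀ y, f (y + b) = mex (insert (f y) (A (y + b))))
    (y : ℕ) : f (y + b) = f y ^^^ 1 := by
  induction y using Nat.strong_induction_on with
  | _ y ih =>
  let S := insert (f y ^^^ 1) (A y)
  have hS : Sᶜ.Nonempty := ((hfin y).insert _).infinite_compl.nonempty
  have hmex : mex S = f y := by
    rcases lt_or_ge y b with hyb | hby
    · rw [hlt y hyb, mex_insert_of_ne]
      simp [← hlt y hyb]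
    · obtain ⟨z, rfl⟩ := Nat.exists_eq_add_of_le' hby
      have hz : f (z + b) ^^^ 1 = f z := by
        rw [ih z (by omega), Nat.xor_xor_cancel_right]
      simp only [S, hz]
      exact (hadd z).symm
  have himage : insert (f y) (A (y + b)) = (· ^^^ 1) '' S := by
    rw [Set.image_insert_eq, Nat.xor_xor_cancel_right, hA]
  calc
    f (y + b) = mex ((· ^^^ 1) '' S) := by rw [hadd, himage]
    _ = mex S ^^^ 1 := mex_image_xor_one hS (hmex ▸ Set.mem_insert _ _)
    _ = f y ^^^ 1 := by rw [hmex]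

/-- The `SG`-values of the options of `(x, y)` reached by a transfer `(i, j) ∈ T`, that is, by the
move to `(x - i, y + j)`, allowed when `i ≤ x`. -/
def transferValues (T : Finset (ℕ × ℕ)) (SG : ℕ → ℕ → ℕ) (x y : ℕ) : Set ℕ :=
  (fun t => SG (x - t.1) (y + t.2)) '' {t ∈ (T : Set (ℕ × ℕ)) | t.1 ≤ x}

/-- `SG` satisfies the Sprague–Grundy recurrence of the transfer game with an arbitrary finite set
`T` of transfers, in which one may also move from `(x, y)` to `(x, y - b)` when `b ≤ y`. Lengyel
transfer games are the case of two transfers. -/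
def IsTransferSG (b : ℕ) (T : Finset (ℕ × ℕ)) (SG : ℕ → ℕ → ℕ) : Prop :=
  ∀ x y, SG x y = mex ((if b ≤ y then {SG x (y - b)} else ∅) ∪ transferValues T SG x y)

section Transfer

variable {b : ℕ} {T : Finset (ℕ × ℕ)} {SG : ℕ → ℕ → ℕ}

variable (T SG) in
theorem finite_transferValues (x y : ℕ) :
    (transferValues T SG x y).Finite :=
  (T.finite_toSet.sep _).image _

theorem mem_transferValues {x y n : ℕ} :
    n ∈ transferValues T SG x y ↔ ∃ t ∈ T, t.1 ≤ x ∧ SG (x - t.1) (y + t.2) = n := by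
  simp only [transferValues, Set.mem_image, Set.mem_ofPred_eq, Finset.mem_coe, and_assoc]

theorem transferValues_add (hT : ∀ t ∈ T, 0 < t.1) {x : ℕ}
    (h : ∀ x' < x, ∀ y, SG x' (y + b) = SG x' y ^^^ 1) (y : ℕ) :
    transferValues T SG x (y + b) = (· ^^^ 1) '' transferValues T SG x y := by
  rw [transferValues, transferValues, Set.image_image]
  refine Set.image_congr fun t ⟨htT, htx⟩ => ?_
  rw [add_right_comm, h _ (Nat.sub_lt_self (hT t htT) htx)]

theorem IsTransferSG.eq_mex_of_lt (h : IsTransferSG b T SG) (x : ℕ) {y : ℕ} (hy : y < b) :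
    SG x y = mex (transferValues T SG x y) := by
  rw [h x y, if_neg hy.not_ge, Set.empty_union]

theorem IsTransferSG.add_eq_mex_insert (h : IsTransferSG b T SG) (x y : ℕ) :
    SG x (y + b) = mex (insert (SG x y) (transferValues T SG x (y + b))) := by
  rw [h x (y + b), if_pos (Nat.le_add_left b y), Nat.add_sub_cancel, Set.singleton_union]

theorem IsLengyelSG.isTransferSG {x1 y1 x2 y2 : ℕ} (h : IsLengyelSG b x1 y1 x2 y2 SG) :
    IsTransferSG b {(x1, y1), (x2, y2)} SG := by
  intro x y
  rw [h x y, Set.union_assoc]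
  congr 2
  ext n
  by_cases h1 : x1 ≤ x <;> by_cases h2 : x2 ≤ x <;>
    simp [mem_transferValues, h1, h2, eq_comm, or_comm, -Prod.exists]

theorem nim_periodicity_general (hb : 0 < b) (hT : ∀ t ∈ T, 0 < t.1) (hSG : IsTransferSG b T SG)
    (x y : ℕ) : SG x (y + b) = SG x y ^^^ 1 := by
  induction x using Nat.strong_induction_on generalizing y with
  | _ x ih =>
  exact add_eq_xor_one_of_mex_recurrence hb (finite_transferValues T SG x)
    (transferValues_add hT ih) (fun _ => hSG.eq_mex_of_lt x) (hSG.add_eq_mex_insert x) y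

end Transfer

/-- Nim-periodicity: in any Lengyel transfer game `L(b;x₁,y₁;x₂,y₂)`,
`SG(x, y+b) = SG(x,y) ⊕ 1` for every position. -/
theorem nim_periodicity (b x1 x2 y1 y2 : ℕ) (hb : 0 < b) (hx1 : 0 < x1) (hx2 : 0 < x2)
    (SG : ℕ → ℕ → ℕ) (hSG : IsLengyelSG b x1 y1 x2 y2 SG) :
    ∀ x y : ℕ, SG x (y + b) = SG x y ^^^ 1 :=
  nim_periodicity_general hb (by simp [hx1, hx2]) hSG.isTransferSG
end

section
/- (Dilation) For all positive integers m and n, the Sprague–Grundy array of the dilated Lengyel transfer game L(nb; m·x₁, n·y₁; m·x₂, n·y₂) is obtained from that of L(b;x₁,y₁;x₂,y₂) by replacing each entry by an m×n block copy of itself: for all (x,y) ∈ ℕ×ℕ, SG_{L(nb;mx₁,ny₁;mx₂,ny₂)}(x,y) = SG_{L(b;x₁,y₁;x₂,y₂)}(⌊x/m⌋, ⌊y/n⌋). -/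
/-!
The block map `(x, y) ↦ (⌊x/m⌋, ⌊y/n⌋)` carries the options of each position of the dilated game
exactly onto the options of its image in the original game, so the pullback of a Sprague–Grundy
function along it again satisfies the mex recurrence. Since every move decreases the position
lexicographically, that recurrence has at most one solution.
-/

section SpragueGrundy

variable {α β : Type*}

/-- `g` is a Sprague–Grundy function of the impartial game on `α` in which the legal moves from `p`
lead to the elements of `options p`. Termination of the game is not part of the notion. -/
def IsSpragueGrundy (options : α → Set α) (g : α → ℕ) : Prop :=
  ∀ p, g p = mex (g '' options p)

theorem IsSpragueGrundy.comp {A : α → Set α} {B : β → Set β} {g : α → ℕ} {π : β → α}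
    (hg : IsSpragueGrundy A g) (hπ : ∀ q, π '' B q = A (π q)) : IsSpragueGrundy B (g ∘ π) := by
  intro q
  rw [Set.image_comp, hπ, Function.comp_apply, hg (π q)]

theorem IsSpragueGrundy.unique {options : α → Set α} {g h : α → ℕ}
    (wf : WellFounded fun q p => q ∈ options p)
    (hg : IsSpragueGrundy options g) (hh : IsSpragueGrundy options h) : g = h := by
  funext p
  induction p using wf.induction with
  | _ p ih => rw [hg p, hh p, Set.image_congr ih]

end SpragueGrundy

section Lengyel

variable {b x1 y1 x2 y2 : ℕ}

/-- The set of positions reachable in one move from `p` in the Lengyel transfer game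
`L(b; x₁,y₁; x₂,y₂)`. -/
def lengyelOptions (b x1 y1 x2 y2 : ℕ) (p : ℕ × ℕ) : Set (ℕ × ℕ) :=
  (if b ≤ p.2 then {(p.1, p.2 - b)} else ∅) ∪
  (if x1 ≤ p.1 then {(p.1 - x1, p.2 + y1)} else ∅) ∪
  (if x2 ≤ p.1 then {(p.1 - x2, p.2 + y2)} else ∅)

theorem isLengyelSG_iff_isSpragueGrundy {SG : ℕ → ℕ → ℕ} :
    IsLengyelSG b x1 y1 x2 y2 SG ↔
      IsSpragueGrundy (lengyelOptions b x1 y1 x2 y2) (Function.uncurry SG) := by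
  simp only [IsLengyelSG, IsSpragueGrundy, lengyelOptions, Prod.forall, Set.image_union,
    apply_ite (Set.image (Function.uncurry SG)), Set.image_singleton, Set.image_empty,
    Function.uncurry_apply_pair]

theorem toLex_lt_of_mem_lengyelOptions (hb : 0 < b) (hx1 : 0 < x1) (hx2 : 0 < x2) {p q : ℕ × ℕ}
    (hq : q ∈ lengyelOptions b x1 y1 x2 y2 p) : toLex q < toLex p := by
  simp only [lengyelOptions, Set.mem_union, Set.mem_ite_empty_right, Set.mem_singleton_iff] at hq
  rw [Prod.Lex.toLex_lt_toLex]
  rcases hq with (⟨hle, rfl⟩ | ⟨hle, rfl⟩) | ⟨hle, rfl⟩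
  · exact .inr ⟨rfl, Nat.sub_lt_self hb hle⟩
  · exact .inl (Nat.sub_lt_self hx1 hle)
  · exact .inl (Nat.sub_lt_self hx2 hle)

theorem wellFounded_lengyelOptions (hb : 0 < b) (hx1 : 0 < x1) (hx2 : 0 < x2) :
    WellFounded fun q p => q ∈ lengyelOptions b x1 y1 x2 y2 p :=
  Subrelation.wf (toLex_lt_of_mem_lengyelOptions hb hx1 hx2) (InvImage.wf toLex wellFounded_lt)

theorem image_div_lengyelOptions {m n : ℕ} (hm : 0 < m) (hn : 0 < n) (p : ℕ × ℕ) :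
    Prod.map (· / m) (· / n) '' lengyelOptions (n * b) (m * x1) (n * y1) (m * x2) (n * y2) p =
      lengyelOptions b x1 y1 x2 y2 (Prod.map (· / m) (· / n) p) := by
  have mul_le_iff {k : ℕ} (hk : 0 < k) (c z : ℕ) : k * c ≤ z ↔ c ≤ z / k := by
    rw [Nat.le_div_iff_mul_le hk, mul_comm]
  simp only [lengyelOptions, Set.image_union, apply_ite (Set.image (Prod.map (· / m) (· / n))),
    Set.image_singleton, Set.image_empty, Prod.map_apply, Prod.map_fst, Prod.map_snd,
    mul_le_iff hm, mul_le_iff hn, Nat.sub_mul_div, Nat.add_mul_div_left _ _ hn]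

end Lengyel

/-- Dilation: the SG array of `L(nb; m·x₁, n·y₁; m·x₂, n·y₂)` is obtained from that of
`L(b;x₁,y₁;x₂,y₂)` by replacing each entry with an `m × n` block copy of itself. -/
theorem dilation (b x1 x2 y1 y2 m n : ℕ)
    (hb : 0 < b) (hx1 : 0 < x1) (hx2 : 0 < x2) (hm : 0 < m) (hn : 0 < n)
    (SG SG' : ℕ → ℕ → ℕ)
    (hSG : IsLengyelSG b x1 y1 x2 y2 SG)
    (hSG' : IsLengyelSG (n * b) (m * x1) (n * y1) (m * x2) (n * y2) SG') :
    ∀ x y : ℕ, SG' x y = SG (x / m) (y / n) := by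
  have pullback := (isLengyelSG_iff_isSpragueGrundy.1 hSG).comp (image_div_lengyelOptions hm hn)
  have wf := wellFounded_lengyelOptions (y1 := n * y1) (y2 := n * y2)
    (Nat.mul_pos hn hb) (Nat.mul_pos hm hx1) (Nat.mul_pos hm hx2)
  intro x y
  exact congrFun ((isLengyelSG_iff_isSpragueGrundy.1 hSG').unique wf pullback) (x, y)
end

section
/- (Zeroeth Main Theorem) Consider the two-move game L(b;x₁,y₁). If y₁ is an odd multiple of b (i.e. there is an odd k ≥ 1 with y₁ = k·b), then L(b;x₁,y₁) has period (1, 2b): SG(x+1,y) = SG(x,y) for all (x,y), and 2b is the least positive q with SG(x,y+q) = SG(x,y) for all (x,y). Otherwise, setting p = 2b·x₁ / gcd(2b, y₁+b), the game has period (p, 2b): p is the least positive integer with SG(x+p,y) = SG(x,y) for all (x,y), and 2b is the least positive q with SG(x,y+q) = SG(x,y) for all (x,y). -/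
/-- `SG` is the Sprague–Grundy function of the two-move game `L(b; x₁,y₁)`:
from `(x,y)` one may move to `(x, y−b)` (when `y ≥ b`) or to `(x−x₁, y+y₁)` (when `x ≥ x₁`). -/
def IsLengyel2SG (b x1 y1 : ℕ) (SG : ℕ → ℕ → ℕ) : Prop :=
  ∀ x y : ℕ, SG x y = mex
    ((if b ≤ y then ({SG x (y - b)} : Set ℕ) else ∅) ∪
     (if x1 ≤ x then ({SG (x - x1) (y + y1)} : Set ℕ) else ∅))

/-!
Reading `y` in blocks of length `b`, the map `y ↦ ⌊y / b⌋ mod 2` alternates along every chain of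
moves `(x, y) → (x, y - b)`. A move `(x, y) → (x - x₁, y + y₁)` lowers
`y + ⌊x / x₁⌋ (y₁ + b)` by exactly `b` too, and positions without moves have `x < x₁` and `y < b`,
so the Sprague–Grundy value of `(x, y)` is the parity of `⌊(y + ⌊x / x₁⌋ (y₁ + b)) / b⌋`.
Both periods are then read off from the periods of the maps `x ↦ ⌊x / d⌋ mod n`: with
`d = b`, `n = 2` for `y`, and with `d = x₁`, `n = 2b / gcd(2b, y₁ + b)` for `x`. The odd multiples
`y₁` of `b` are exactly the case `n = 1`.
-/

theorem isLeast_pos_of_iff_dvd {n : ℕ} {P : ℕ → Prop} (hn : 0 < n) (hP : ∀ m, P m ↔ n ∣ m) :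
    IsLeast {m | 0 < m ∧ P m} n :=
  ⟨⟨hn, (hP n).2 dvd_rfl⟩, fun m hm => Nat.le_of_dvd hm.1 ((hP m).1 hm.2)⟩

theorem mul_right_modEq_iff_div_gcd {m : ℕ} (hm : 0 < m) (a b c : ℕ) :
    a * c ≡ b * c [MOD m] ↔ a ≡ b [MOD m / m.gcd c] := by
  refine ⟨Nat.ModEq.cancel_right_div_gcd hm, fun h => (h.mul_right' c).of_dvd ?_⟩
  calc m = m / m.gcd c * m.gcd c := (Nat.div_mul_cancel (m.gcd_dvd_left c)).symm
    _ ∣ m / m.gcd c * c := mul_dvd_mul_left _ (m.gcd_dvd_right c)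

theorem div_gcd_eq_one_iff {m : ℕ} (hm : 0 < m) (c : ℕ) : m / m.gcd c = 1 ↔ m ∣ c := by
  rw [← Nat.gcd_eq_left_iff_dvd, Nat.div_eq_iff_eq_mul_left (Nat.gcd_pos_of_pos_left c hm)
    (m.gcd_dvd_left c), one_mul, eq_comm]

theorem forall_add_div_modEq_iff {n d : ℕ} (hn : n ≠ 1) (hd : 0 < d) (p : ℕ) :
    (∀ x, (x + p) / d ≡ x / d [MOD n]) ↔ n * d ∣ p := by
  constructor
  · intro h
    have hq : n ∣ p / d := by simpa [Nat.modEq_zero_iff_dvd] using h 0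
    have hr : p % d = 0 := by
      by_contra hr
      have hlt : p % d < d := Nat.mod_lt p hd
      have hcarry : d - p % d + p = d * (p / d + 1) := by
        have := Nat.mod_add_div p d
        rw [mul_add, mul_one]
        omega
      have hstep : n ∣ p / d + 1 := by
        have := h (d - p % d)
        rwa [hcarry, Nat.mul_div_cancel_left _ hd,
          Nat.div_eq_of_lt (by omega : d - p % d < d), Nat.modEq_zero_iff_dvd] at this
      exact hn (Nat.dvd_one.1 ((Nat.dvd_add_right hq).1 hstep))
    rw [← Nat.div_mul_cancel (Nat.dvd_of_mod_eq_zero hr)]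
    exact mul_dvd_mul_right hq d
  · rintro ⟨k, rfl⟩ x
    rw [show n * d * k = n * k * d by ring, Nat.add_mul_div_right _ _ hd,
      Nat.add_modEq_left_iff]
    exact dvd_mul_right n k

theorem exists_odd_and_eq_mul_iff (b y : ℕ) :
    (∃ k, Odd k ∧ y = k * b) ↔ 2 * b ∣ y + b := by
  constructor
  · rintro ⟨_, ⟨m, rfl⟩, rfl⟩
    exact ⟨m + 1, by ring⟩
  · rintro ⟨_ | m, hm⟩
    · exact ⟨1, odd_one, by omega⟩
    · exact ⟨2 * m + 1, odd_two_mul_add_one m, by linarith⟩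

/-- The parity of the index of the block of length `b` (starting from `[0, b)`) that contains `y`.
It is the Sprague–Grundy value of the game whose only move subtracts `b`. -/
def blockParity (b y : ℕ) : ℕ := y / b % 2

section BlockParity

variable {b : ℕ}

theorem blockParity_lt_two (b y : ℕ) : blockParity b y < 2 := Nat.mod_lt _ two_pos

theorem blockParity_eq_zero_of_lt {y : ℕ} (h : y < b) : blockParity b y = 0 := by
  rw [blockParity, Nat.div_eq_of_lt h]

theorem one_sub_blockParity_add_self (hb : 0 < b) (y : ℕ) :
    1 - blockParity b (y + b) = blockParity b y := by
  rw [blockParity, blockParity, Nat.add_div_right y hb]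
  omega

theorem periodic_blockParity_iff (hb : 0 < b) {c : ℕ} :
    Function.Periodic (blockParity b) c ↔ 2 * b ∣ c :=
  forall_add_div_modEq_iff (by norm_num) hb c

theorem forall_blockParity_add_eq_iff (hb : 0 < b) {u v : ℕ} :
    (∀ y, blockParity b (y + u) = blockParity b (y + v)) ↔ u ≡ v [MOD 2 * b] := by
  have hper : Function.Periodic (blockParity b) (2 * b) := (periodic_blockParity_iff hb).2 dvd_rfl
  constructor
  · intro h
    obtain ⟨w, hw⟩ : ∃ w, 2 * b ∣ w + v :=
      ⟨2 * b * v - v, v, Nat.sub_add_cancel (Nat.le_mul_of_pos_left v (by omega))⟩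
    have hu : 2 * b ∣ w + u := (periodic_blockParity_iff hb).1 fun y => by
      rw [← add_assoc, h, add_assoc, (periodic_blockParity_iff hb).2 hw]
    exact Nat.ModEq.add_left_cancel' w
      ((Nat.modEq_zero_iff_dvd.2 hu).trans (Nat.modEq_zero_iff_dvd.2 hw).symm)
  · intro h y
    rw [← hper.map_mod_nat (y + u), h.add_left y, hper.map_mod_nat]

end BlockParity

theorem mex_eq_of_subset_singleton_one_sub {S : Set ℕ} {v : ℕ} (hv : v < 2)
    (hS : S ⊆ {1 - v}) (hne : v = 1 → S.Nonempty) : mex S = v := by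
  refine IsLeast.csInf_eq ⟨fun hmem => ?_, fun n hn => ?_⟩
  · have : v = 1 - v := hS hmem
    omega
  · by_contra! hlt
    obtain ⟨m, hm⟩ := hne (by omega)
    have : m = 1 - v := hS hm
    exact hn (by rwa [show n = m by omega])

theorem isLengyel2SG_blockParity {b x1 : ℕ} (hb : 0 < b) (hx1 : 0 < x1) (y1 : ℕ) :
    IsLengyel2SG b x1 y1 fun x y => blockParity b (y + x / x1 * (y1 + b)) := by
  intro x y
  refine (mex_eq_of_subset_singleton_one_sub (blockParity_lt_two _ _)
    (Set.union_subset ?_ ?_) fun hone => ?_).symm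
  · split_ifs with hy
    · obtain ⟨z, rfl⟩ := Nat.exists_eq_add_of_le' hy
      rw [Set.singleton_subset_singleton, Nat.add_sub_cancel, add_right_comm,
        one_sub_blockParity_add_self hb]
    · exact Set.empty_subset _
  · split_ifs with hx
    · obtain ⟨w, rfl⟩ := Nat.exists_eq_add_of_le' hx
      have hlower : y + (w / x1 + 1) * (y1 + b) = y + y1 + w / x1 * (y1 + b) + b := by ring
      rw [Set.singleton_subset_singleton, Nat.add_sub_cancel, Nat.add_div_right w hx1, hlower,
        one_sub_blockParity_add_self hb]
    · exact Set.empty_subset _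
  · by_cases hy : b ≤ y
    · simp [hy]
    · by_cases hx : x1 ≤ x
      · simp [hx]
      · have hzero : blockParity b (y + x / x1 * (y1 + b)) = 0 := by
          rw [Nat.div_eq_of_lt (not_le.1 hx), zero_mul, add_zero,
            blockParity_eq_zero_of_lt (not_le.1 hy)]
        omega

namespace IsLengyel2SG

variable {b x1 y1 : ℕ} {SG SG' : ℕ → ℕ → ℕ}

theorem unique (hb : 0 < b) (hx1 : 0 < x1) (h : IsLengyel2SG b x1 y1 SG)
    (h' : IsLengyel2SG b x1 y1 SG') : SG = SG' := by
  funext x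
  induction x using Nat.strong_induction_on with
  | _ x ihx =>
  funext y
  induction y using Nat.strong_induction_on with
  | _ y ihy =>
  rw [h x y, h' x y]
  congr 2
  · split_ifs
    · rw [ihy (y - b) (by omega)]
    · rfl
  · split_ifs
    · rw [ihx (x - x1) (by omega)]
    · rfl

theorem eq_blockParity (hb : 0 < b) (hx1 : 0 < x1) (h : IsLengyel2SG b x1 y1 SG) (x y : ℕ) :
    SG x y = blockParity b (y + x / x1 * (y1 + b)) :=
  congrFun₂ (h.unique hb hx1 (isLengyel2SG_blockParity hb hx1 y1)) x y

theorem forall_add_right_eq_iff (hb : 0 < b) (hx1 : 0 < x1) (h : IsLengyel2SG b x1 y1 SG)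
    (q : ℕ) : (∀ x y, SG x (y + q) = SG x y) ↔ 2 * b ∣ q := by
  simp only [h.eq_blockParity hb hx1, add_assoc, forall_blockParity_add_eq_iff hb,
    Nat.add_modEq_right_iff, forall_const]

theorem forall_add_left_eq_iff (hb : 0 < b) (hx1 : 0 < x1) (h : IsLengyel2SG b x1 y1 SG)
    (p : ℕ) : (∀ x y, SG (x + p) y = SG x y) ↔
      ∀ x, (x + p) / x1 ≡ x / x1 [MOD 2 * b / (2 * b).gcd (y1 + b)] := by
  simp only [h.eq_blockParity hb hx1, forall_blockParity_add_eq_iff hb,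
    mul_right_modEq_iff_div_gcd (Nat.mul_pos two_pos hb)]

end IsLengyel2SG

/-- Zeroeth Main Theorem: in the two-move game `L(b;x₁,y₁)`, if `y₁` is an odd multiple
of `b` then the period is `(1, 2b)`; otherwise the period is
`(2b·x₁ / gcd(2b, y₁+b), 2b)`, with both components least. -/
theorem zeroeth_main_theorem (b x1 y1 : ℕ) (hb : 0 < b) (hx1 : 0 < x1)
    (SG : ℕ → ℕ → ℕ) (hSG : IsLengyel2SG b x1 y1 SG) :
    ((∃ k : ℕ, Odd k ∧ y1 = k * b) →
      ((∀ x y : ℕ, SG (x + 1) y = SG x y) ∧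
       IsLeast {q : ℕ | 0 < q ∧ ∀ x y : ℕ, SG x (y + q) = SG x y} (2 * b))) ∧
    (¬ (∃ k : ℕ, Odd k ∧ y1 = k * b) →
      (IsLeast {p : ℕ | 0 < p ∧ ∀ x y : ℕ, SG (x + p) y = SG x y}
          (2 * b * x1 / Nat.gcd (2 * b) (y1 + b)) ∧
       IsLeast {q : ℕ | 0 < q ∧ ∀ x y : ℕ, SG x (y + q) = SG x y} (2 * b))) := by
  have h2b : 0 < 2 * b := Nat.mul_pos two_pos hb
  have isLeast_right := isLeast_pos_of_iff_dvd h2b (hSG.forall_add_right_eq_iff hb hx1)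
  rw [exists_odd_and_eq_mul_iff, ← div_gcd_eq_one_iff h2b]
  refine ⟨fun hone => ⟨(hSG.forall_add_left_eq_iff hb hx1 1).2 fun x => ?_, isLeast_right⟩,
    fun hne => ⟨?_, isLeast_right⟩⟩
  · rw [hone]
    exact Nat.modEq_one
  · rw [Nat.mul_div_right_comm (Nat.gcd_dvd_left _ _)]
    refine isLeast_pos_of_iff_dvd (Nat.mul_pos (Nat.div_gcd_pos_of_pos_left _ h2b) hx1) fun p => ?_
    rw [hSG.forall_add_left_eq_iff hb hx1, forall_add_div_modEq_iff hne hx1]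
end

section
/- (First Main Theorem) Consider the Lengyel transfer game L(b;x₁,0;1,1) with b, x₁ positive integers. Say the game has period (p,q) if p is the least positive integer with SG(x+p, y) = SG(x,y) for all (x,y) ∈ ℕ×ℕ and q is the least positive integer with SG(x, y+q) = SG(x,y) for all (x,y) ∈ ℕ×ℕ. Then: (a) if b = 1 and x₁ = 1, the period is (2,2); (b) if b is even and x₁ = k·b for some odd integer k, the period is (2b, 2b); (c) in all other cases, the period is (2b(x₁+1), 2b). -/
/-! With only the moves `(0, -b)` and `(-1, 1)`, both of which flip the parity of
`x + ⌊(x + y) / b⌋`, this parity is the Grundy value of `(x, y)`. If `b` is even and `x₁` is an odd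
multiple of `b`, the move `(-x₁, 0)` flips it as well, so the Grundy function does not change.
Otherwise (and unless `b = x₁ = 1`) the columns fall into blocks of length `x₁ + 1`: block `i`
starts with `x₁` columns of the same pattern moved down by `i`, and in its last column a third
option may force the values `2` and `3`. Passing to the next block shifts the pattern by one, whence
the horizontal period `2b(x₁ + 1)`. A smaller one is not a multiple of `x₁ + 1`, as column `0`
shows, so it carries some `0`-`1` column onto a last column, which then has no `2` or `3` either;
this happens only for `x₁` an odd multiple of an even `b`. -/

theorem isLeast_compl_iff_eq_mex {S : Set ℕ} (hS : S.Finite) {n : ℕ} :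
    IsLeast Sᶜ n ↔ n = mex S := by
  refine ⟨fun h => h.csInf_eq.symm, ?_⟩
  rintro rfl
  exact ⟨Nat.sInf_mem hS.infinite_compl.nonempty, fun _ hm => Nat.sInf_le hm⟩

theorem isLeast_compl_of_lt_two {S : Set ℕ} {v : ℕ} (hv : v < 2)
    (hS : ∀ m ∈ S, m = 1 - v ∨ 2 ≤ m) (hflip : v = 0 ∨ 1 - v ∈ S) : IsLeast Sᶜ v := by
  refine ⟨fun hmem => ?_, fun m hm => ?_⟩
  · have := hS v hmem
    omega
  · by_contra! hlt
    rcases hflip with h | h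
    · omega
    · exact hm (by rwa [show m = 1 - v by omega])

/-- The values of `SG` at the positions reachable in one move from `(x, y)` in
`L(b; x₁,y₁; x₂,y₂)`. -/
def optionValues (b x₁ y₁ x₂ y₂ : ℕ) (SG : ℕ → ℕ → ℕ) (x y : ℕ) : Set ℕ :=
  {v | (b ≤ y ∧ v = SG x (y - b)) ∨ (x₁ ≤ x ∧ v = SG (x - x₁) (y + y₁)) ∨
    (x₂ ≤ x ∧ v = SG (x - x₂) (y + y₂))}

/-- The positive periods of `SG` in its first argument. -/
def horizontalPeriods (SG : ℕ → ℕ → ℕ) : Set ℕ :=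
  {p | 0 < p ∧ ∀ x y, SG (x + p) y = SG x y}

/-- The positive periods of `SG` in its second argument. -/
def verticalPeriods (SG : ℕ → ℕ → ℕ) : Set ℕ :=
  {q | 0 < q ∧ ∀ x y, SG x (y + q) = SG x y}

/-- The Grundy value of `(x, y)` in the game whose only moves are `(0, -b)` and `(-1, 1)`:
each of these moves flips the parity of `x + (x + y) / b`. -/
def stripe (b x y : ℕ) : ℕ := (x + (x + y) / b) % 2

section General

variable {b x₁ y₁ x₂ y₂ : ℕ} {SG SG' : ℕ → ℕ → ℕ}

theorem finite_optionValues (x y : ℕ) : (optionValues b x₁ y₁ x₂ y₂ SG x y).Finite := by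
  refine (Set.toFinite {SG x (y - b), SG (x - x₁) (y + y₁), SG (x - x₂) (y + y₂)}).subset ?_
  rintro v (⟨-, h⟩ | ⟨-, h⟩ | ⟨-, h⟩) <;> simp [h]

theorem isLengyelSG_iff_isLeast : IsLengyelSG b x₁ y₁ x₂ y₂ SG ↔
    ∀ x y, IsLeast (optionValues b x₁ y₁ x₂ y₂ SG x y)ᶜ (SG x y) := by
  refine forall₂_congr fun x y => ?_
  rw [isLeast_compl_iff_eq_mex (finite_optionValues x y)]
  congr! 2
  ext v
  simp only [optionValues, Set.mem_union, Set.mem_ofPred_eq, or_assoc]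
  split_ifs <;> simp [*]

theorem IsLengyelSG.unique (hb : 0 < b) (hx₁ : 0 < x₁) (hx₂ : 0 < x₂)
    (h : IsLengyelSG b x₁ y₁ x₂ y₂ SG) (h' : IsLengyelSG b x₁ y₁ x₂ y₂ SG') : SG = SG' := by
  suffices ∀ x y, SG x y = SG' x y from funext₂ this
  rw [isLengyelSG_iff_isLeast] at h h'
  intro x
  induction x using Nat.strong_induction_on with | _ x ihx
  intro y
  induction y using Nat.strong_induction_on with | _ y ihy
  have hoptions : optionValues b x₁ y₁ x₂ y₂ SG x y = optionValues b x₁ y₁ x₂ y₂ SG' x y := by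
    ext v
    refine or_congr (and_congr_right fun hy => ?_)
      (or_congr (and_congr_right fun hx => ?_) (and_congr_right fun hx => ?_))
    · rw [ihy _ (by omega)]
    · rw [ihx _ (by omega)]
    · rw [ihx _ (by omega)]
  exact (h x y).unique (hoptions ▸ h' x y)

end General

section Stripe

variable {b : ℕ}

theorem stripe_lt_two (x y : ℕ) : stripe b x y < 2 := Nat.mod_lt _ two_pos

@[simp]
theorem stripe_zero_left (y : ℕ) : stripe b 0 y = y / b % 2 := by simp [stripe]

theorem stripe_add_height (hb : 0 < b) (x y : ℕ) : stripe b x (y + b) = 1 - stripe b x y := by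
  simp only [stripe, ← add_assoc, Nat.add_div_right _ hb]
  omega

theorem stripe_sub_height (hb : 0 < b) (x : ℕ) {y : ℕ} (hy : b ≤ y) :
    stripe b x (y - b) = 1 - stripe b x y := by
  have hflip := stripe_add_height hb x (y - b)
  have hlt := stripe_lt_two (b := b) x (y - b)
  rw [Nat.sub_add_cancel hy] at hflip
  omega

theorem stripe_add_two_mul (hb : 0 < b) (x y : ℕ) : stripe b x (y + 2 * b) = stripe b x y := by
  have hlt := stripe_lt_two (b := b) x y
  rw [two_mul, ← add_assoc, stripe_add_height hb, stripe_add_height hb]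
  omega

theorem stripe_succ (x y : ℕ) : stripe b (x + 1) y = 1 - stripe b x (y + 1) := by
  simp only [stripe, show x + 1 + y = x + (y + 1) by omega]
  omega

theorem stripe_pred {x : ℕ} (hx : 1 ≤ x) (y : ℕ) :
    stripe b (x - 1) (y + 1) = 1 - stripe b x y := by
  have hlt := stripe_lt_two (b := b) (x - 1) (y + 1)
  have hflip := stripe_succ (b := b) (x - 1) y
  rw [Nat.sub_add_cancel hx] at hflip
  omega

theorem stripe_one_eq_stripe_zero_iff (y : ℕ) :
    stripe b 1 y = stripe b 0 y ↔ b ∣ y + 1 := by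
  simp only [stripe, add_comm 1 y, zero_add, Nat.succ_div]
  split_ifs with hdvd <;> simp only [hdvd, iff_true, iff_false] <;> omega

/- Test `h` at a multiple of `b`, and, if `b ∤ q`, at the next `t` at which `(t + q) / b`
jumps while `t / b` does not. -/
theorem dvd_and_even_of_parity_shift (hb : 0 < b) {c i q : ℕ}
    (h : ∀ t ≥ i, (c + (t + q) / b) % 2 = t / b % 2) : b ∣ q ∧ Even (c + q / b) := by
  have hi : i ≤ i * b := Nat.le_mul_of_pos_right i hb
  have hmultiple : (c + q / b) % 2 = 0 := by
    have := h (i * b) hi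
    rw [add_comm (i * b), Nat.add_mul_div_right _ _ hb, Nat.mul_div_cancel _ hb] at this
    omega
  refine ⟨?_, Nat.even_iff.2 hmultiple⟩
  by_contra hdvd
  have hlt : b - q % b < b :=
    Nat.sub_lt hb (Nat.pos_of_ne_zero (mt Nat.dvd_of_mod_eq_zero hdvd))
  have hmod : q / b * b + q % b = q := Nat.div_add_mod' q b
  have hjump := h (b - q % b + i * b) (by omega)
  rw [show b - q % b + i * b + q = (q / b + 1 + i) * b by
      have := Nat.mod_lt q hb
      rw [add_mul, add_mul]; omega,
    Nat.mul_div_cancel _ hb, Nat.add_mul_div_right _ _ hb,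
    Nat.div_eq_of_lt hlt] at hjump
  omega

theorem two_mul_dvd_of_dvd_of_even_div {q : ℕ} (hdvd : b ∣ q) (heven : Even (q / b)) :
    2 * b ∣ q := by
  rw [← Nat.div_mul_cancel hdvd]
  exact Nat.mul_dvd_mul_right heven.two_dvd b

theorem two_mul_dvd_of_stripe_zero_periodic (hb : 0 < b) {q : ℕ}
    (h : ∀ y, stripe b 0 (y + q) = stripe b 0 y) : 2 * b ∣ q := by
  obtain ⟨hdvd, heven⟩ := dvd_and_even_of_parity_shift (c := 0) (i := 0) (q := q) hb
    fun t _ => by simpa using h t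
  exact two_mul_dvd_of_dvd_of_even_div hdvd (by simpa using heven)

end Stripe

section ColumnZero

variable {b x₁ y₁ x₂ y₂ : ℕ} {SG : ℕ → ℕ → ℕ}

theorem IsLengyelSG.zero_left (hb : 0 < b) (hx₁ : 0 < x₁) (hx₂ : 0 < x₂)
    (hSG : IsLengyelSG b x₁ y₁ x₂ y₂ SG) (y : ℕ) : SG 0 y = stripe b 0 y := by
  induction y using Nat.strong_induction_on with | _ y ih
  refine (isLengyelSG_iff_isLeast.1 hSG 0 y).unique
    (isLeast_compl_of_lt_two (stripe_lt_two 0 y) ?_ ?_)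
  · rintro m (⟨hy, rfl⟩ | ⟨hx, -⟩ | ⟨hx, -⟩)
    · exact .inl ((ih _ (by omega)).trans (stripe_sub_height hb 0 hy))
    · omega
    · omega
  · rcases lt_or_ge y b with hy | hy
    · exact .inl (by simp [Nat.div_eq_of_lt hy])
    · exact .inr (.inl ⟨hy, by rw [ih _ (by omega), stripe_sub_height hb 0 hy]⟩)

theorem IsLengyelSG.isLeast_verticalPeriods (hb : 0 < b) (hx₁ : 0 < x₁) (hx₂ : 0 < x₂)
    (hSG : IsLengyelSG b x₁ y₁ x₂ y₂ SG) (hperiodic : ∀ x y, SG x (y + 2 * b) = SG x y) :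
    IsLeast (verticalPeriods SG) (2 * b) := by
  refine ⟨⟨by omega, hperiodic⟩, fun q ⟨hq, h⟩ => Nat.le_of_dvd hq ?_⟩
  refine two_mul_dvd_of_stripe_zero_periodic hb fun y => ?_
  simpa only [hSG.zero_left hb hx₁ hx₂] using h 0 y

end ColumnZero

section UnitGame

/-- The Grundy function of `L(1; 1,0; 1,1)`. -/
def unitValue (x y : ℕ) : ℕ := 2 * (x % 2) + y % 2

theorem isLengyelSG_unitValue : IsLengyelSG 1 1 0 1 1 unitValue := by
  refine isLengyelSG_iff_isLeast.2 fun x y => ⟨?_, fun m hm => ?_⟩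
  · rintro (h | h | h) <;> simp only [unitValue] at h <;> omega
  · simp only [optionValues, unitValue, Set.mem_compl_iff, Set.mem_ofPred_eq] at hm
    simp only [unitValue]
    omega

theorem unitValue_add_two_height (x y : ℕ) : unitValue x (y + 2) = unitValue x y := by
  simp only [unitValue, Nat.add_mod_right]

theorem isLeast_horizontalPeriods_unitValue : IsLeast (horizontalPeriods unitValue) 2 := by
  refine ⟨⟨two_pos, fun x y => by simp only [unitValue, Nat.add_mod_right]⟩, fun p ⟨hp, h⟩ => ?_⟩
  have := h 0 0
  simp only [unitValue] at this
  omega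

end UnitGame

section OddMultiple

variable {b k : ℕ}

theorem isLengyelSG_stripe (hb : 0 < b) (hb_even : Even b) (hk : Odd k) :
    IsLengyelSG b (k * b) 0 1 1 (stripe b) := by
  refine isLengyelSG_iff_isLeast.2 fun x y => isLeast_compl_of_lt_two (stripe_lt_two x y) ?_ ?_
  · rintro m (⟨hy, rfl⟩ | ⟨hx, rfl⟩ | ⟨hx, rfl⟩)
    · exact .inl (stripe_sub_height hb x hy)
    · obtain ⟨x, rfl⟩ := Nat.exists_eq_add_of_le' hx
      have heven : k * b % 2 = 0 := Nat.even_iff.1 (hb_even.mul_left k)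
      have hodd : k % 2 = 1 := Nat.odd_iff.1 hk
      left
      simp only [stripe, Nat.add_sub_cancel, add_zero, add_right_comm x (k * b) y,
        Nat.add_mul_div_right _ _ hb]
      omega
    · exact .inl (stripe_pred hx y)
  · rcases Nat.eq_zero_or_pos x with rfl | hx
    · rcases lt_or_ge y b with hy | hy
      · exact .inl (by simp [Nat.div_eq_of_lt hy])
      · exact .inr (.inl ⟨hy, (stripe_sub_height hb 0 hy).symm⟩)
    · exact .inr (.inr (.inr ⟨hx, (stripe_pred hx y).symm⟩))

theorem isLeast_horizontalPeriods_stripe (hb : 0 < b) (hb_even : Even b) :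
    IsLeast (horizontalPeriods (stripe b)) (2 * b) := by
  refine ⟨⟨by omega, fun x y => ?_⟩, fun p ⟨hp, h⟩ => Nat.le_of_dvd hp ?_⟩
  · simp only [stripe, add_right_comm x (2 * b) y, Nat.add_mul_div_right _ _ hb]
    omega
  · obtain ⟨hdvd, heven⟩ := dvd_and_even_of_parity_shift (c := p) (i := 0) (q := p) hb
      fun t _ => by simpa [stripe, add_comm p t] using h 0 t
    have hp_even : Even p := hb_even.trans_dvd hdvd
    exact two_mul_dvd_of_dvd_of_even_div hdvd ((Nat.even_add.1 heven).1 hp_even)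

end OddMultiple

/-- The Grundy value of `L(b; x₁,0; 1,1)` at `(i * (x₁ + 1) + r, y)` for `r ≤ x₁`, when
`b = x₁ = 1` is excluded. In the last column `r = x₁` of a block, the options reached by
`(-x₁, 0)` and `(-1, 1)` have values `stripe b 0 (y + i)` and `1 - stripe b x₁ (y + i)`; the values
`2` and `3` appear where these two differ. -/
def blockValue (b x₁ i r y : ℕ) : ℕ :=
  if r = x₁ ∧ stripe b x₁ (y + i) = stripe b 0 (y + i) then 2 + stripe b 0 y
  else stripe b r (y + i)

/-- The Grundy function of `L(b; x₁,0; 1,1)` when `b = x₁ = 1` is excluded, with the columns cut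
into blocks of `x₁ + 1`. -/
def transferValue (b x₁ x y : ℕ) : ℕ := blockValue b x₁ (x / (x₁ + 1)) (x % (x₁ + 1)) y

section Block

variable {b x₁ i r y : ℕ}

theorem transferValue_mul_add (hr : r ≤ x₁) :
    transferValue b x₁ (i * (x₁ + 1) + r) y = blockValue b x₁ i r y := by
  obtain ⟨hdiv, hmod⟩ := (Nat.div_mod_unique x₁.succ_pos).2
    ⟨(by ring : r + (x₁ + 1) * i = i * (x₁ + 1) + r), Nat.lt_succ_iff.2 hr⟩
  rw [transferValue, hdiv, hmod]

theorem blockValue_of_lt (hr : r < x₁) : blockValue b x₁ i r y = stripe b r (y + i) :=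
  if_neg fun h => hr.ne h.1

theorem blockValue_last_of_eq (h : stripe b x₁ (y + i) = stripe b 0 (y + i)) :
    blockValue b x₁ i x₁ y = 2 + stripe b 0 y :=
  if_pos ⟨rfl, h⟩

theorem blockValue_last_of_ne (h : stripe b x₁ (y + i) ≠ stripe b 0 (y + i)) :
    blockValue b x₁ i x₁ y = stripe b x₁ (y + i) :=
  if_neg fun h' => h h'.2

theorem blockValue_eq_stripe_or_two_le :
    blockValue b x₁ i r y = stripe b r (y + i) ∨ 2 ≤ blockValue b x₁ i r y := by
  unfold blockValue
  split_ifs <;> omega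

theorem blockValue_last_eq_one_sub_or_two_le :
    blockValue b x₁ i x₁ y = 1 - stripe b 0 (y + i) ∨ 2 ≤ blockValue b x₁ i x₁ y := by
  by_cases h : stripe b x₁ (y + i) = stripe b 0 (y + i)
  · exact .inr (by rw [blockValue_last_of_eq h]; omega)
  · have hx := stripe_lt_two (b := b) x₁ (y + i)
    have h0 := stripe_lt_two (b := b) 0 (y + i)
    exact .inl (by rw [blockValue_last_of_ne h]; omega)

theorem stripe_eq_stripe_zero_sub_height_iff (hb : 0 < b) (hy : b ≤ y) :
    stripe b x₁ (y - b + i) = stripe b 0 (y - b + i) ↔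
      stripe b x₁ (y + i) = stripe b 0 (y + i) := by
  have hx := stripe_lt_two (b := b) x₁ (y + i)
  have h0 := stripe_lt_two (b := b) 0 (y + i)
  rw [← Nat.sub_add_comm hy, stripe_sub_height hb _ (by omega), stripe_sub_height hb _ (by omega)]
  omega

theorem blockValue_add_two_mul_height (hb : 0 < b) :
    blockValue b x₁ i r (y + 2 * b) = blockValue b x₁ i r y := by
  simp only [blockValue, add_right_comm y (2 * b) i, stripe_add_two_mul hb]

theorem blockValue_add_two_mul_index (hb : 0 < b) :
    blockValue b x₁ (i + 2 * b) r y = blockValue b x₁ i r y := by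
  simp only [blockValue, ← add_assoc, stripe_add_two_mul hb]

theorem transferValue_sub_one (hr : 1 ≤ r) (hrx : r ≤ x₁) :
    transferValue b x₁ (i * (x₁ + 1) + r - 1) (y + 1) = 1 - stripe b r (y + i) := by
  rw [Nat.add_sub_assoc hr, transferValue_mul_add (by omega), blockValue_of_lt (by omega),
    add_right_comm, stripe_pred hr]

theorem transferValue_sub_one_of_first :
    transferValue b x₁ ((i + 1) * (x₁ + 1) - 1) y = blockValue b x₁ i x₁ y := by
  rw [← transferValue_mul_add le_rfl]
  congr 1
  rw [add_mul]
  omega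

theorem transferValue_sub (hr : r < x₁) :
    transferValue b x₁ ((i + 1) * (x₁ + 1) + r - x₁) y = blockValue b x₁ i (r + 1) y := by
  rw [← transferValue_mul_add (by omega)]
  congr 1
  rw [add_mul]
  omega

theorem eq_one_sub_or_two_le_of_mem_optionValues (hb : 0 < b) (hr : r < x₁) {m : ℕ}
    (hm : m ∈ optionValues b x₁ 0 1 1 (transferValue b x₁) (i * (x₁ + 1) + r) y) :
    m = 1 - stripe b r (y + i) ∨ 2 ≤ m := by
  rcases hm with ⟨hy, rfl⟩ | ⟨hx, rfl⟩ | ⟨hx, rfl⟩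
  · rw [transferValue_mul_add hr.le, blockValue_of_lt hr, ← Nat.sub_add_comm hy,
      stripe_sub_height hb _ (by omega)]
    exact .inl rfl
  · obtain _ | j := i
    · omega
    rw [transferValue_sub hr, ← add_assoc, ← stripe_succ]
    exact blockValue_eq_stripe_or_two_le
  · obtain rfl | hpos := Nat.eq_zero_or_pos r
    · obtain _ | j := i
      · omega
      rw [add_zero, transferValue_sub_one_of_first, ← add_assoc, add_right_comm]
      exact blockValue_last_eq_one_sub_or_two_le
    · exact .inl (transferValue_sub_one hpos hr.le)

/- For `x₁ = 1` the options reached by `(-1, 1)` and `(-1, 0)` are exceptional for `b ∣ y + i + 2`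
and for `b ∣ y + i + 1` respectively; both happen only for `b = 1`. -/
theorem blockValue_one_flip (hb : b ≠ 1) :
    blockValue b 1 i 1 (y + 1) = 1 - stripe b 0 (y + i + 1) ∨
      blockValue b 1 i 1 y = 1 - stripe b 0 (y + i + 1) := by
  by_cases h : stripe b 1 (y + i) = stripe b 0 (y + i)
  · have hdvd : b ∣ y + i + 1 := (stripe_one_eq_stripe_zero_iff _).1 h
    have hne : stripe b 1 (y + 1 + i) ≠ stripe b 0 (y + 1 + i) := by
      rw [add_right_comm, Ne, stripe_one_eq_stripe_zero_iff, Nat.dvd_add_right hdvd, Nat.dvd_one]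
      exact hb
    have h1 := stripe_lt_two (b := b) 1 (y + 1 + i)
    have h0 := stripe_lt_two (b := b) 0 (y + 1 + i)
    left
    rw [blockValue_last_of_ne hne, add_right_comm y i 1]
    omega
  · exact .inr (by rw [blockValue_last_of_ne h, stripe_succ])

theorem stripe_eq_zero_or_one_sub_mem_optionValues (hb : 0 < b) (hne : ¬(b = 1 ∧ x₁ = 1))
    (hr : r < x₁) : stripe b r (y + i) = 0 ∨ 1 - stripe b r (y + i) ∈
      optionValues b x₁ 0 1 1 (transferValue b x₁) (i * (x₁ + 1) + r) y := by
  obtain hpos | rfl := (Nat.eq_zero_or_pos r).symm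
  · exact .inr (.inr (.inr ⟨by omega, (transferValue_sub_one hpos hr.le).symm⟩))
  obtain _ | j := i
  · rcases lt_or_ge y b with hy | hy
    · exact .inl (by simp [Nat.div_eq_of_lt hy])
    · refine .inr (.inl ⟨hy, ?_⟩)
      rw [transferValue_mul_add hr.le, blockValue_of_lt hr, add_zero, add_zero,
        stripe_sub_height hb _ hy]
  have hx : x₁ + 1 ≤ (j + 1) * (x₁ + 1) + 0 := Nat.le_mul_of_pos_left _ j.succ_pos
  have hleft := transferValue_sub (b := b) (i := j) (y := y) hr
  obtain rfl | hx₁ := eq_or_ne x₁ 1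
  · rcases blockValue_one_flip (i := j) (y := y) (by omega : b ≠ 1) with h | h
    · refine .inr (.inr (.inr ⟨by omega, ?_⟩))
      rw [add_zero, transferValue_sub_one_of_first, h, ← add_assoc]
    · exact .inr (.inr (.inl ⟨by omega, (hleft.trans h).symm⟩))
  · refine .inr (.inr (.inl ⟨by omega, ?_⟩))
    rw [add_zero y, hleft, blockValue_of_lt (by omega), stripe_succ, ← add_assoc]

theorem isLeast_transferValue_of_lt (hb : 0 < b) (hne : ¬(b = 1 ∧ x₁ = 1)) (hr : r < x₁) :
    IsLeast (optionValues b x₁ 0 1 1 (transferValue b x₁) (i * (x₁ + 1) + r) y)ᶜ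
      (stripe b r (y + i)) :=
  isLeast_compl_of_lt_two (stripe_lt_two _ _)
    (fun _ => eq_one_sub_or_two_le_of_mem_optionValues hb hr)
    (stripe_eq_zero_or_one_sub_mem_optionValues hb hne hr)

theorem mem_optionValues_last_iff (hx₁ : 0 < x₁) {m : ℕ} :
    m ∈ optionValues b x₁ 0 1 1 (transferValue b x₁) (i * (x₁ + 1) + x₁) y ↔
      (b ≤ y ∧ m = blockValue b x₁ i x₁ (y - b)) ∨ m = stripe b 0 (y + i) ∨
        m = 1 - stripe b x₁ (y + i) := by
  have hzero : transferValue b x₁ (i * (x₁ + 1)) y = stripe b 0 (y + i) :=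
    (transferValue_mul_add (r := 0) hx₁.le).trans (blockValue_of_lt hx₁)
  have hle : 1 ≤ i * (x₁ + 1) + x₁ := by omega
  simp only [optionValues, Set.mem_ofPred_eq, transferValue_mul_add le_rfl, Nat.add_sub_cancel,
    add_zero, transferValue_sub_one hx₁ le_rfl, hzero, hle, Nat.le_add_left, true_and]

theorem isLeast_transferValue_last (hb : 0 < b) (hx₁ : 0 < x₁) :
    IsLeast (optionValues b x₁ 0 1 1 (transferValue b x₁) (i * (x₁ + 1) + x₁) y)ᶜ
      (blockValue b x₁ i x₁ y) := by
  have hx := stripe_lt_two (b := b) x₁ (y + i)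
  have h0 := stripe_lt_two (b := b) 0 (y + i)
  by_cases h : stripe b x₁ (y + i) = stripe b 0 (y + i)
  · have hlow : y < b → stripe b 0 y = 0 := fun hy => by simp [Nat.div_eq_of_lt hy]
    have hdown : b ≤ y → blockValue b x₁ i x₁ (y - b) = 2 + (1 - stripe b 0 y) := fun hy => by
      rw [blockValue_last_of_eq ((stripe_eq_stripe_zero_sub_height_iff hb hy).2 h),
        stripe_sub_height hb 0 hy]
    have hy := stripe_lt_two (b := b) 0 y
    rw [blockValue_last_of_eq h]
    refine ⟨fun hmem => ?_, fun m hm => ?_⟩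
    · rw [mem_optionValues_last_iff hx₁] at hmem
      omega
    · rw [Set.mem_compl_iff, mem_optionValues_last_iff hx₁] at hm
      omega
  · rw [blockValue_last_of_ne h]
    refine isLeast_compl_of_lt_two hx (fun m hm => ?_) (.inr ?_)
    · rw [mem_optionValues_last_iff hx₁] at hm
      rcases hm with ⟨hy, rfl⟩ | hm | hm
      · rw [blockValue_last_of_ne (mt (stripe_eq_stripe_zero_sub_height_iff hb hy).1 h),
          ← Nat.sub_add_comm hy, stripe_sub_height hb _ (by omega)]
        exact .inl rfl
      · omega
      · exact .inl hm
    · exact (mem_optionValues_last_iff hx₁).2 (.inr (.inr rfl))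

theorem isLengyelSG_transferValue (hb : 0 < b) (hx₁ : 0 < x₁) (hne : ¬(b = 1 ∧ x₁ = 1)) :
    IsLengyelSG b x₁ 0 1 1 (transferValue b x₁) := by
  refine isLengyelSG_iff_isLeast.2 fun x y => ?_
  have hr : x % (x₁ + 1) ≤ x₁ := Nat.lt_succ_iff.1 (Nat.mod_lt _ x₁.succ_pos)
  rw [← Nat.div_add_mod' x (x₁ + 1), transferValue_mul_add hr]
  rcases hr.lt_or_eq with hlt | heq
  · rw [blockValue_of_lt hlt]
    exact isLeast_transferValue_of_lt hb hne hlt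
  · rw [heq]
    exact isLeast_transferValue_last hb hx₁

theorem even_and_exists_odd_mul_of_stripe_ne (hb : 0 < b)
    (h : ∀ t ≥ i, stripe b x₁ t ≠ stripe b 0 t) : Even b ∧ ∃ k, Odd k ∧ x₁ = k * b := by
  obtain ⟨⟨k, rfl⟩, heven⟩ := dvd_and_even_of_parity_shift (c := x₁ + 1) (i := i) (q := x₁) hb
    fun t ht => by
      have := h t ht
      simp only [stripe, zero_add, add_comm x₁ t] at this
      omega
  rw [Nat.mul_div_cancel_left k hb] at heven
  have hodd : Odd ((b + 1) * k) := by
    rw [add_mul, one_mul, ← Nat.not_even_iff_odd]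
    grind
  obtain ⟨hb_succ, hk⟩ := Nat.odd_mul.1 hodd
  exact ⟨by grind, k, hk, mul_comm b k⟩

theorem isLeast_horizontalPeriods_transferValue (hb : 0 < b) (hx₁ : 0 < x₁)
    (hnot : ¬(Even b ∧ ∃ k, Odd k ∧ x₁ = k * b)) :
    IsLeast (horizontalPeriods (transferValue b x₁)) (2 * b * (x₁ + 1)) := by
  refine ⟨⟨by positivity, fun x y => ?_⟩, fun p ⟨hp, h⟩ => ?_⟩
  · rw [transferValue, Nat.add_mul_div_right _ _ x₁.succ_pos, Nat.add_mul_mod_self_right,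
      blockValue_add_two_mul_index hb, transferValue]
  obtain ⟨i, r, hr, rfl⟩ : ∃ i r, r ≤ x₁ ∧ p = i * (x₁ + 1) + r :=
    ⟨_, _, Nat.lt_succ_iff.1 (Nat.mod_lt p x₁.succ_pos), (Nat.div_add_mod' p (x₁ + 1)).symm⟩
  obtain rfl | hpos := Nat.eq_zero_or_pos r
  · have hdvd : 2 * b ∣ i := two_mul_dvd_of_stripe_zero_periodic hb fun y => by
      have hcolumn := h (0 * (x₁ + 1) + 0) y
      rwa [show 0 * (x₁ + 1) + 0 + (i * (x₁ + 1) + 0) = i * (x₁ + 1) + 0 by omega,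
        transferValue_mul_add hr, transferValue_mul_add hr, blockValue_of_lt hx₁,
        blockValue_of_lt hx₁] at hcolumn
    exact Nat.le_of_dvd hp (Nat.mul_dvd_mul_right hdvd _)
  · refine absurd (even_and_exists_odd_mul_of_stripe_ne hb (i := i) fun t ht heq => ?_) hnot
    have hcolumn := h (0 * (x₁ + 1) + (x₁ - r)) (t - i)
    rw [show 0 * (x₁ + 1) + (x₁ - r) + (i * (x₁ + 1) + r) = i * (x₁ + 1) + x₁ by omega,
      transferValue_mul_add le_rfl, transferValue_mul_add (by omega),
      blockValue_of_lt (by omega : x₁ - r < x₁),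
      blockValue_last_of_eq (by rwa [Nat.sub_add_cancel ht])] at hcolumn
    have := stripe_lt_two (b := b) (x₁ - r) (t - i + 0)
    omega

end Block

/-- First Main Theorem for `L(b;x₁,0;1,1)`:
(a) if `b = 1` and `x₁ = 1`, the period is `(2,2)`;
(b) if `b` is even and `x₁` is an odd multiple of `b`, the period is `(2b, 2b)`;
(c) in all other cases, the period is `(2b(x₁+1), 2b)`.
Here "period `(p,q)`" means `p` is the least positive horizontal period and `q` the least
positive vertical period. -/
theorem first_main_theorem (b x1 : ℕ) (hb : 0 < b) (hx1 : 0 < x1)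
    (SG : ℕ → ℕ → ℕ) (hSG : IsLengyelSG b x1 0 1 1 SG) :
    ((b = 1 ∧ x1 = 1) →
      (IsLeast {p : ℕ | 0 < p ∧ ∀ x y : ℕ, SG (x + p) y = SG x y} 2 ∧
       IsLeast {q : ℕ | 0 < q ∧ ∀ x y : ℕ, SG x (y + q) = SG x y} 2)) ∧
    ((Even b ∧ ∃ k : ℕ, Odd k ∧ x1 = k * b) →
      (IsLeast {p : ℕ | 0 < p ∧ ∀ x y : ℕ, SG (x + p) y = SG x y} (2 * b) ∧
       IsLeast {q : ℕ | 0 < q ∧ ∀ x y : ℕ, SG x (y + q) = SG x y} (2 * b))) ∧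
    (¬ (b = 1 ∧ x1 = 1) → ¬ (Even b ∧ ∃ k : ℕ, Odd k ∧ x1 = k * b) →
      (IsLeast {p : ℕ | 0 < p ∧ ∀ x y : ℕ, SG (x + p) y = SG x y} (2 * b * (x1 + 1)) ∧
       IsLeast {q : ℕ | 0 < q ∧ ∀ x y : ℕ, SG x (y + q) = SG x y} (2 * b))) := by
  refine ⟨?_, ?_, fun hne hnot => ?_⟩
  · rintro ⟨rfl, rfl⟩
    obtain rfl := hSG.unique hb hx1 one_pos isLengyelSG_unitValue
    exact ⟨isLeast_horizontalPeriods_unitValue,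
      hSG.isLeast_verticalPeriods hb hx1 one_pos unitValue_add_two_height⟩
  · rintro ⟨hb_even, k, hk, rfl⟩
    obtain rfl := hSG.unique hb hx1 one_pos (isLengyelSG_stripe hb hb_even hk)
    exact ⟨isLeast_horizontalPeriods_stripe hb hb_even,
      hSG.isLeast_verticalPeriods hb hx1 one_pos (stripe_add_two_mul hb)⟩
  · obtain rfl := hSG.unique hb hx1 one_pos (isLengyelSG_transferValue hb hx1 hne)
    exact ⟨isLeast_horizontalPeriods_transferValue hb hx1 hnot,
      hSG.isLeast_verticalPeriods hb hx1 one_pos fun _ _ => blockValue_add_two_mul_height hb⟩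
end
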